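/- arXiv:2107.11438 — 3 statements merged into one kernel-verified Lean document; each statement's English description precedes it below -/
import Mathlib

section
/- Let n ≥ 1, k ≥ 3, let v_1, …, v_n be an orthonormal basis of the Euclidean space ℝⁿ, let λ_1, …, λ_n ∈ ℝ, and let α_1, …, α_n ∈ ℝ. Define x : ℝ → ℝⁿ by x(t) = ∑_{r=1}^n α_r·(1 − (k−2)·λ_r·α_r^{k−2}·t)^{−1/(k−2)}·v_r. Then x(0) = ∑_{r=1}^n α_r·v_r, and for every t ∈ ℝ such that 1 − (k−2)·λ_r·α_r^{k−2}·t > 0 for all r, the function x is differentiable at t with derivative x′(t) = ∑_{r=1}^n λ_r·⟨v_r, x(t)⟩^{k−1}·v_r. -/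
/-!
Along an orthonormal family `v` the field `∑ r, λ_r ⟨v_r, x⟩^{k-1} v_r` decouples: the coordinate
`y = ⟨v_r, x⟩` satisfies the Bernoulli equation `ẏ = λ_r y^{k-1}`. For `y ≠ 0`, substituting
`u = y^{-(k-2)}` gives `u̇ = -(k-2) λ_r`. Solving this linear equation with `y 0 = α_r` yields
`y t = α_r (1 - (k-2) λ_r α_r^{k-2} t)^{-1/(k-2)}`, which is also a solution for `α_r = 0`.
-/

theorem rpow_neg_one_div_pow_succ {m : ℕ} (hm : m ≠ 0) {y : ℝ} (hy : 0 ≤ y) :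
    (y ^ (-1 / (m : ℝ))) ^ (m + 1) = y ^ (-1 / (m : ℝ) - 1) := by
  have hexponent : -1 / (m : ℝ) * ((m + 1 : ℕ) : ℝ) = -1 / (m : ℝ) - 1 := by
    push_cast
    field_simp
    ring
  rw [← Real.rpow_mul_natCast hy, hexponent]

theorem hasDerivAt_bernoulli_solution {m : ℕ} (hm : m ≠ 0) (l a : ℝ) {t : ℝ}
    (ht : 0 < 1 - (m : ℝ) * l * a ^ m * t) :
    HasDerivAt (fun s : ℝ => a * (1 - (m : ℝ) * l * a ^ m * s) ^ (-1 / (m : ℝ)))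
      (l * (a * (1 - (m : ℝ) * l * a ^ m * t) ^ (-1 / (m : ℝ))) ^ (m + 1)) t := by
  have hbase : HasDerivAt (fun s : ℝ => 1 - (m : ℝ) * l * a ^ m * s)
      (-((m : ℝ) * l * a ^ m)) t := by
    simpa using ((hasDerivAt_id t).const_mul ((m : ℝ) * l * a ^ m)).const_sub 1
  have hsolution := (hbase.rpow_const (p := -1 / (m : ℝ)) (Or.inl ht.ne')).const_mul a
  refine hsolution.congr_deriv ?_
  rw [mul_pow, rpow_neg_one_div_pow_succ hm ht.le]
  field_simp
  ring

theorem hasDerivAt_sum_smul_of_orthonormal {𝕜 E ι : Type*} [RCLike 𝕜]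
    [NormedAddCommGroup E] [InnerProductSpace 𝕜 E] [Fintype ι] {v : ι → E}
    (hv : Orthonormal 𝕜 v) {f c : ι → 𝕜 → 𝕜} {t : 𝕜}
    (hc : ∀ r, HasDerivAt (c r) (f r (c r t)) t) :
    HasDerivAt (fun s => ∑ r, c r s • v r)
      (∑ r, f r (inner 𝕜 (v r) (∑ j, c j t • v j)) • v r) t := by
  simp only [hv.inner_right_fintype]
  exact HasDerivAt.fun_sum fun r _ => (hc r).smul_const (v r)

theorem stmt_1_general {E ι : Type*} [NormedAddCommGroup E] [InnerProductSpace ℝ E] [Fintype ι]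
    {k : ℕ} (hk : 3 ≤ k) {v : ι → E} (hv : Orthonormal ℝ v) {lam α : ι → ℝ} {x : ℝ → E}
    (hx : ∀ t : ℝ, x t = ∑ r,
      (α r * (1 - ((k : ℝ) - 2) * lam r * α r ^ (k - 2) * t) ^ (-1 / ((k : ℝ) - 2))) • v r) :
    x 0 = ∑ r, α r • v r ∧
    ∀ t : ℝ, (∀ r, 0 < 1 - ((k : ℝ) - 2) * lam r * α r ^ (k - 2) * t) →
      HasDerivAt x (∑ r, (lam r * (inner ℝ (v r) (x t) : ℝ) ^ (k - 1)) • v r) t := by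
  obtain ⟨m, rfl⟩ : ∃ m, k = m + 2 := ⟨k - 2, by lia⟩
  have hm : m ≠ 0 := by lia
  have hcast : ((m + 2 : ℕ) : ℝ) - 2 = m := by push_cast; ring
  simp only [hcast, Nat.add_sub_cancel] at hx ⊢
  refine ⟨by simp [hx], fun t ht => ?_⟩
  rw [funext hx]
  exact hasDerivAt_sum_smul_of_orthonormal hv (f := fun r y => lam r * y ^ (m + 1))
    fun r => hasDerivAt_bernoulli_solution hm (lam r) (α r) (ht r)

/-- Proposition 1: the explicit solution of the odeco HPDS `ẋ = ∑ r, λ_r ⟨v_r, x⟩^{k-1} v_r`. -/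
theorem stmt_1 (n k : ℕ) (hn : 1 ≤ n) (hk : 3 ≤ k)
    (v : OrthonormalBasis (Fin n) ℝ (EuclideanSpace ℝ (Fin n)))
    (lam α : Fin n → ℝ)
    (x : ℝ → EuclideanSpace ℝ (Fin n))
    (hx : ∀ t : ℝ, x t = ∑ r : Fin n,
      (α r * (1 - ((k : ℝ) - 2) * lam r * α r ^ (k - 2) * t) ^ (-1 / ((k : ℝ) - 2))) • v r) :
    x 0 = ∑ r : Fin n, α r • v r ∧
    ∀ t : ℝ, (∀ r : Fin n, 0 < 1 - ((k : ℝ) - 2) * lam r * α r ^ (k - 2) * t) →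
      HasDerivAt x (∑ r : Fin n, (lam r * (inner ℝ (v r) (x t) : ℝ) ^ (k - 1)) • v r) t :=
  stmt_1_general hk v.orthonormal hx
end

section
/- Let n ≥ 1 and k ≥ 2. Let v_1, …, v_n and w_1, …, w_n be vectors in ℝⁿ, and define F : ℝⁿ → ℝⁿ by F(x) = ∑_{r=1}^n ⟨v_r, x⟩^{k−1}·w_r (a HPDS whose dynamic tensor has CP decomposition ∑_r v_r ∘ ⋯ ∘ v_r ∘ w_r with R = n). Suppose P is an invertible n × n real matrix and λ_1, …, λ_n are nonzero reals such that (1) Pᵀ v_r = λ_r^{−1}·P^{−1} w_r for every r, and (2) the family u_r := Pᵀ v_r, r = 1, …, n, is orthonormal in the Euclidean space ℝⁿ. Then for every y ∈ ℝⁿ, P^{−1}·F(P·y) = ∑_{r=1}^n λ_r·⟨u_r, y⟩^{k−1}·u_r; that is, under the change of variables x = P y the HPDS ẋ = F(x) becomes the odeco HPDS ẏ = ∑_r λ_r ⟨u_r, y⟩^{k−1} u_r. -/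
open Matrix

/-!
The change of variables acts separately on the two families of a CP decomposition: precomposing the
field with `P` replaces each `v_r` by `Pᵀ v_r`, and postcomposing it with `P⁻¹` replaces each `w_r`
by `P⁻¹ w_r`. Condition (1) says that the two new families are proportional, `P⁻¹ w_r = λ_r u_r`
with `u_r = Pᵀ v_r`.
-/

section CPVectorField

variable {𝕜 ι E G : Type*} [RCLike 𝕜] [Fintype ι]
  [NormedAddCommGroup E] [InnerProductSpace 𝕜 E]

variable (𝕜) in
/-- The vector field `x ↦ A xᵈ` of the almost symmetric tensor `A = ∑ r, v r ∘ ⋯ ∘ v r ∘ w r` with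
`d` factors `v r` in each term, so that `A` has order `k = d + 1`. The factors `w r` may lie in a
different space from the `v r`, so that a linear map can be applied to them alone. -/
def cpVectorField [AddCommMonoid G] [Module 𝕜 G] (d : ℕ) (v : ι → E) (w : ι → G) (x : E) : G :=
  ∑ r, inner 𝕜 (v r) x ^ d • w r

theorem map_cpVectorField {G' : Type*} [AddCommMonoid G] [Module 𝕜 G] [AddCommMonoid G']
    [Module 𝕜 G'] (L : G →ₗ[𝕜] G') (d : ℕ) (v : ι → E) (w : ι → G) (x : E) :
    L (cpVectorField 𝕜 d v w x) = cpVectorField 𝕜 d v (fun r ↦ L (w r)) x := by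
  simp only [cpVectorField, map_sum, map_smul]

theorem cpVectorField_congr_inner {H : Type*} [NormedAddCommGroup H] [InnerProductSpace 𝕜 H]
    [AddCommMonoid G] [Module 𝕜 G] (d : ℕ) {v : ι → E} {u : ι → H} (w : ι → G) {x : E} {y : H}
    (h : ∀ r, inner 𝕜 (v r) x = inner 𝕜 (u r) y) :
    cpVectorField 𝕜 d v w x = cpVectorField 𝕜 d u w y := by
  simp only [cpVectorField, h]

-- `hu` encodes `u r = P† (v r)` through inner products, since between incomplete spaces `P`
-- need not have an adjoint `P†`.
theorem stmt_16_general {H : Type*} [NormedAddCommGroup H] [InnerProductSpace 𝕜 H]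
    (d : ℕ) {v w : ι → E} {u : ι → H} {lam : ι → 𝕜} (P : H ≃ₗ[𝕜] E)
    (hu : ∀ r y, inner 𝕜 (v r) (P y) = inner 𝕜 (u r) y)
    (hw : ∀ r, P.symm (w r) = lam r • u r) (y : H) :
    P.symm (cpVectorField 𝕜 d v w (P y)) = ∑ r, (lam r * inner 𝕜 (u r) y ^ d) • u r :=
  calc
    P.symm (cpVectorField 𝕜 d v w (P y))
    _ = P.symm (cpVectorField 𝕜 d u w y) := by rw [cpVectorField_congr_inner d w (hu · y)]
    _ = cpVectorField 𝕜 d u (fun r ↦ P.symm (w r)) y :=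
      map_cpVectorField P.symm.toLinearMap d u w y
    _ = ∑ r, (lam r * inner 𝕜 (u r) y ^ d) • u r := by
      simp only [cpVectorField, hw, smul_smul, mul_comm]

end CPVectorField

theorem inner_toLp_mulVec {𝕜 m n : Type*} [RCLike 𝕜] [Fintype m] [Fintype n]
    (A : Matrix m n 𝕜) (x : EuclideanSpace 𝕜 m) (y : EuclideanSpace 𝕜 n) :
    inner 𝕜 x (WithLp.toLp 2 (A *ᵥ y)) = inner 𝕜 (WithLp.toLp 2 (Aᴴ *ᵥ x)) y := by
  classical
  rw [← toLpLin_apply 2 2, ← toLpLin_apply 2 2,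
    toEuclideanLin_conjTranspose_eq_adjoint, LinearMap.adjoint_inner_left]

/-- Proposition 6: if `Pᵀ v_r = λ_r⁻¹ P⁻¹ w_r` for all `r` and the family `u_r = Pᵀ v_r` is
orthonormal, then the change of variables `x = P y` transforms the HPDS
`ẋ = ∑ r, ⟨v_r, x⟩^{k-1} w_r` into the odeco HPDS `ẏ = ∑ r, λ_r ⟨u_r, y⟩^{k-1} u_r`. -/
theorem stmt_16 (n k : ℕ) (hn : 1 ≤ n) (hk : 2 ≤ k)
    (v w : Fin n → EuclideanSpace ℝ (Fin n))
    (F : EuclideanSpace ℝ (Fin n) → EuclideanSpace ℝ (Fin n))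
    (hF : ∀ x : EuclideanSpace ℝ (Fin n),
      F x = ∑ r : Fin n, ((inner ℝ (v r) x : ℝ) ^ (k - 1)) • w r)
    (P : Matrix (Fin n) (Fin n) ℝ) (hP : IsUnit P)
    (lam : Fin n → ℝ) (hlam : ∀ r, lam r ≠ 0)
    (u : Fin n → EuclideanSpace ℝ (Fin n))
    (hu : ∀ r : Fin n, u r = Pᵀ *ᵥ (v r))
    (h1 : ∀ r : Fin n, (Pᵀ *ᵥ (v r) : Fin n → ℝ) = (lam r)⁻¹ • (P⁻¹ *ᵥ (w r)))
    (h2 : Orthonormal ℝ u) :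
    ∀ y : EuclideanSpace ℝ (Fin n),
      (WithLp.toLp 2 (P⁻¹ *ᵥ (F (WithLp.toLp 2 (P *ᵥ y)))) : EuclideanSpace ℝ (Fin n)) =
        ∑ r : Fin n, (lam r * (inner ℝ (u r) y : ℝ) ^ (k - 1)) • u r := by
  obtain rfl : F = cpVectorField ℝ (k - 1) v w := funext hF
  obtain rfl : u = fun r ↦ WithLp.toLp 2 (Pᵀ *ᵥ v r) :=
    funext fun r ↦ WithLp.ofLp_injective 2 (hu r)
  have hw (r : Fin n) : P⁻¹ *ᵥ w r = lam r • (Pᵀ *ᵥ v r) :=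
    ((eq_inv_smul_iff₀ (hlam r)).1 (h1 r)).symm
  exact stmt_16_general (k - 1)
    (P.toLinearEquiv (EuclideanSpace.basisFun (Fin n) ℝ).toBasis ((isUnit_iff_isUnit_det P).1 hP))
    (fun r ↦ inner_toLp_mulVec P (v r)) (fun r ↦ congrArg (WithLp.toLp 2) (hw r))
end

section
/- Let n ≥ 1 and k ≥ 2. Let v_1, …, v_n be vectors in ℝⁿ such that the matrix V with columns v_1, …, v_n is invertible, let w_1, …, w_n ∈ ℝⁿ, and define F : ℝⁿ → ℝⁿ by F(x) = ∑_{r=1}^n ⟨v_r, x⟩^{k−1}·w_r. Suppose there exist nonzero reals λ_1, …, λ_n such that for every r, the r-th column of (V^{−1})ᵀ equals λ_r^{−1}·w_r. Then there exist an invertible n × n real matrix P and an orthonormal family u_1, …, u_n in ℝⁿ such that for every y ∈ ℝⁿ, P^{−1}·F(P·y) = ∑_{r=1}^n λ_r·⟨u_r, y⟩^{k−1}·u_r; that is, the HPDS ẋ = F(x) can be transformed by a linear change of variables to an odeco HPDS. -/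
open Matrix

/-!
The linear change of variables `x = P y` acts on the factors of `F` by `v r ↦ Pᴴ (v r)` and
`w r ↦ P⁻¹ (w r)`. For `P = (V⁻¹)ᴴ` the first map is `V⁻¹`, which sends the columns of `V` to the
standard basis, and the second sends the columns of `P`, hence the `w r` up to the factors `lam r`,
to the standard basis as well.
-/

section RidgeField

variable {𝕜 ι E F E' F' : Type*} [RCLike 𝕜] [Fintype ι]
  [NormedAddCommGroup E] [InnerProductSpace 𝕜 E]
  [NormedAddCommGroup E'] [InnerProductSpace 𝕜 E']
  [AddCommGroup F] [Module 𝕜 F] [AddCommGroup F'] [Module 𝕜 F']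

/-- The sum of ridge functions `x ↦ ∑ r, g r ⟪v r, x⟫ • w r`. With `g r t = t ^ (k - 1)` it is the
vector field `x ↦ A x ^ (k - 1)` of the HPDS with tensor `A = ∑ r, v r ∘ ⋯ ∘ v r ∘ w r` of
order `k`. -/
def ridgeField (g : ι → 𝕜 → 𝕜) (v : ι → E) (w : ι → F) (x : E) : F :=
  ∑ r, g r (inner 𝕜 (v r) x) • w r

theorem map_ridgeField_map [FiniteDimensional 𝕜 E] [FiniteDimensional 𝕜 E'] (g : ι → 𝕜 → 𝕜)
    (v : ι → E) (w : ι → F) (A : E' →ₗ[𝕜] E) (B : F →ₗ[𝕜] F') (y : E') :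
    B (ridgeField g v w (A y)) = ridgeField g (fun r ↦ A.adjoint (v r)) (fun r ↦ B (w r)) y := by
  simp only [ridgeField, map_sum, map_smul, LinearMap.adjoint_inner_left]

theorem ridgeField_smul (g : ι → 𝕜 → 𝕜) (v : ι → E) (c : ι → 𝕜) (w : ι → F) (x : E) :
    ridgeField g v (fun r ↦ c r • w r) x = ∑ r, (c r * g r (inner 𝕜 (v r) x)) • w r := by
  simp only [ridgeField, smul_smul, mul_comm]

end RidgeField

theorem toLpLin_inv_col {R ι : Type*} [CommRing R] [Fintype ι] [DecidableEq ι] (p : ENNReal)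
    {M : Matrix ι ι R} (hM : IsUnit M) (r : ι) :
    toLpLin p p M⁻¹ (WithLp.toLp p (M.col r)) = PiLp.single p r 1 := by
  rw [toLpLin_apply, ← mulVec_single_one, mulVec_mulVec,
    nonsing_inv_mul M ((isUnit_iff_isUnit_det M).mp hM), one_mulVec, PiLp.toLp_single]

theorem stmt_17_general {𝕜 ι : Type*} [RCLike 𝕜] [Fintype ι] [DecidableEq ι]
    (g : ι → 𝕜 → 𝕜) (v w : ι → EuclideanSpace 𝕜 ι)
    (V : Matrix ι ι 𝕜) (hV : ∀ j r, V j r = v r j) (hVunit : IsUnit V)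
    (lam : ι → 𝕜) (hw : ∀ r j, w r j = lam r * (V⁻¹)ᴴ j r) :
    ∃ P : Matrix ι ι 𝕜, IsUnit P ∧
      ∃ u : ι → EuclideanSpace 𝕜 ι, Orthonormal 𝕜 u ∧
        ∀ y : EuclideanSpace 𝕜 ι,
          WithLp.toLp 2 (P⁻¹ *ᵥ (ridgeField g v w (WithLp.toLp 2 (P *ᵥ y)) : EuclideanSpace 𝕜 ι)) =
            ∑ r, (lam r * g r (inner 𝕜 (u r) y)) • u r := by
  set P := (V⁻¹)ᴴ with hP
  have hPunit : IsUnit P := (isUnit_nonsing_inv_iff.mpr hVunit).star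
  have hv_col (r : ι) : v r = WithLp.toLp 2 (V.col r) := by
    ext j
    exact (hV j r).symm
  have hw_col (r : ι) : w r = lam r • WithLp.toLp 2 (P.col r) := by
    ext j
    exact hw r j
  have adjoint_v (r : ι) : (toEuclideanLin P).adjoint (v r) = EuclideanSpace.basisFun ι 𝕜 r := by
    rw [← toEuclideanLin_conjTranspose_eq_adjoint, hP, conjTranspose_conjTranspose, hv_col,
      toLpLin_inv_col 2 hVunit, EuclideanSpace.basisFun_apply]
  have inv_w (r : ι) : toEuclideanLin P⁻¹ (w r) = lam r • EuclideanSpace.basisFun ι 𝕜 r := by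
    rw [hw_col, map_smul, toLpLin_inv_col 2 hPunit, EuclideanSpace.basisFun_apply]
  refine ⟨P, hPunit, EuclideanSpace.basisFun ι 𝕜, (EuclideanSpace.basisFun ι 𝕜).orthonormal,
    fun y ↦ ?_⟩
  rw [← toLpLin_apply, ← toLpLin_apply, map_ridgeField_map]
  simp only [adjoint_v, inv_w, ridgeField_smul]

/-- Corollary 3: if the columns of `W = (V⁻¹)ᵀ` satisfy `w_r = λ_r⁻¹ · (column r of W)`, i.e.
the `r`-th column of `(V⁻¹)ᵀ` equals `λ_r⁻¹ w_r`, then the HPDS `ẋ = ∑ r, ⟨v_r, x⟩^{k-1} w_r`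
can be transformed by an invertible linear change of variables to an odeco HPDS. -/
theorem stmt_17 (n k : ℕ) (hn : 1 ≤ n) (hk : 2 ≤ k)
    (v w : Fin n → EuclideanSpace ℝ (Fin n))
    (V : Matrix (Fin n) (Fin n) ℝ) (hV : ∀ j r : Fin n, V j r = v r j)
    (hVunit : IsUnit V)
    (F : EuclideanSpace ℝ (Fin n) → EuclideanSpace ℝ (Fin n))
    (hF : ∀ x : EuclideanSpace ℝ (Fin n),
      F x = ∑ r : Fin n, ((inner ℝ (v r) x : ℝ) ^ (k - 1)) • w r)
    (lam : Fin n → ℝ) (hlam : ∀ r, lam r ≠ 0)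
    (hW : ∀ r j : Fin n, (V⁻¹)ᵀ j r = (lam r)⁻¹ * w r j) :
    ∃ P : Matrix (Fin n) (Fin n) ℝ, IsUnit P ∧
      ∃ u : Fin n → EuclideanSpace ℝ (Fin n), Orthonormal ℝ u ∧
        ∀ y : EuclideanSpace ℝ (Fin n),
          (WithLp.toLp 2 (P⁻¹ *ᵥ (F (WithLp.toLp 2 (P *ᵥ y)))) : EuclideanSpace ℝ (Fin n)) =
            ∑ r : Fin n, (lam r * (inner ℝ (u r) y : ℝ) ^ (k - 1)) • u r := by
  obtain rfl : F = ridgeField (fun _ t ↦ t ^ (k - 1)) v w := funext hF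
  exact stmt_17_general _ v w V hV hVunit lam fun r j ↦ by
    rw [conjTranspose_eq_transpose_of_trivial, hW, mul_inv_cancel_left₀ (hlam r)]
end
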